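/- For n ≥ 2 and d ∈ (0,1], if 𝒜 and ℬ are families of subsets of [n] satisfying c(𝒜,ℬ) ≥ 2^{−d/300}·|𝒜|·|ℬ|, then |𝒜|·|ℬ| < n^d·2^n. -/

import Mathlib

open Finset

/-- `crossComp 𝒜 ℬ` is the number of pairs `(A, B) ∈ 𝒜 × ℬ` with `A ⊊ B`. -/
def crossComp {n : ℕ} (𝒜 ℬ : Finset (Finset (Fin n))) : ℕ :=
  ((𝒜 ×ˢ ℬ).filter (fun p => p.1 ⊂ p.2)).card

/-!
Split the cube along one coordinate. The number of pairs `A ⊆ B` satisfies a two-point inequality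
with exponent `1 - q` and constant `2 ^ q + 2 * θ`, and inequalities of this shape tensorize, so the
number of pairs is at most `(2 ^ q + 2 * θ) ^ n * (#𝒜 * #ℬ) ^ (1 - q)`. Taking `q` of order
`1 / log n` and `θ = n ^ (-15)` settles `d ≥ n ^ (-2)`.

For smaller `d` the error `θ` is too costly, but then all except a proportion `δ` of order `d` of
the pairs satisfy `A ⊆ B`. Hence a single set `U` separates most of `𝒜` (below `U`) from most of `ℬ`
(above `U`). If `#𝒜 * #ℬ ≥ 2 ^ n`, then both parts nearly fill the subcubes below and above `U`, so
an outlying set would by itself lie in a positive proportion of non-pairs. This raises the two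
separated proportions to `1 - 3 * δ`, whence `(1 - 3 * δ) ^ 2 * (#𝒜 * #ℬ) ≤ 2 ^ n`, contradicting
`#𝒜 * #ℬ ≥ n ^ d * 2 ^ n` since `n ^ d ≥ 1 + 300 * δ`.
-/

section TwoPointInequality

variable {q θ x y : ℝ}

lemma rpow_add_rpow_le_two_rpow_mul {a b s : ℝ} (ha : 0 ≤ a) (hb : 0 ≤ b) (hs₀ : 0 ≤ s)
    (hs₁ : s ≤ 1) : a ^ s + b ^ s ≤ 2 ^ (1 - s) * (a + b) ^ s := by
  have midpoint : (1 / 2) * a ^ s + (1 / 2) * b ^ s ≤ ((1 / 2) * a + (1 / 2) * b) ^ s :=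
    (Real.concaveOn_rpow hs₀ hs₁).2 ha hb (by norm_num) (by norm_num) (by norm_num)
  have two_rpow : (2 : ℝ) ^ (1 - s) = 2 * (1 / 2) ^ s := by
    rw [Real.rpow_sub two_pos, Real.rpow_one, one_div, Real.inv_rpow two_pos.le, div_eq_mul_inv]
  rw [← mul_add, ← mul_add, Real.mul_rpow (by norm_num) (add_nonneg ha hb)] at midpoint
  rw [two_rpow]
  linarith

lemma one_sub_rpow_le_one_sub_mul {s : ℝ} (hx : x ≤ 1) (hs₀ : 0 ≤ s) (hs₁ : s ≤ 1) :
    (1 - x) ^ s ≤ 1 - s * x := by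
  simpa [sub_eq_add_neg] using rpow_one_add_le_one_add_mul_self (s := -x) (by linarith) hs₀ hs₁

lemma rpow_le_tangent {s t : ℝ} (hx : 0 ≤ x) (ht : 0 < t) (hs₀ : 0 ≤ s) (hs₁ : s ≤ 1) :
    x ^ s ≤ t ^ (s - 1) * (s * x + (1 - s) * t) := by
  have amgm : x ^ s * t ^ (1 - s) ≤ s * x + (1 - s) * t :=
    Real.geom_mean_le_arith_mean2_weighted hs₀ (by linarith) hx ht.le (by ring)
  calc x ^ s = t ^ (s - 1) * (x ^ s * t ^ (1 - s)) := by
        rw [mul_left_comm, ← Real.rpow_add ht, sub_add_sub_cancel, sub_self, Real.rpow_zero,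
          mul_one]
    _ ≤ t ^ (s - 1) * (s * x + (1 - s) * t) := by gcongr

lemma rpow_one_sub_le_mul {c : ℝ} (hθ : 0 < θ) (hθy : θ ≤ y) (hq : 0 ≤ q) (hc : θ ^ (-q) ≤ c) :
    y ^ (1 - q) ≤ c * y := by
  have hy : 0 < y := hθ.trans_le hθy
  calc y ^ (1 - q) = y ^ (-q) * y := by
        rw [sub_eq_neg_add, Real.rpow_add hy, Real.rpow_one]
    _ ≤ c * y := by
        gcongr
        exact (Real.rpow_le_rpow_of_nonpos hθ hθy (neg_nonpos.2 hq)).trans hc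

lemma one_add_half_mul_le_two_rpow (hq : 0 ≤ q) : 1 + q / 2 ≤ (2 : ℝ) ^ q := by
  have log_two : 1 / 2 ≤ Real.log 2 := by linarith [Real.log_two_gt_d9]
  rw [Real.rpow_def_of_pos two_pos]
  nlinarith [Real.add_one_le_exp (Real.log 2 * q)]

lemma two_rpow_le_one_add (hq₀ : 0 ≤ q) (hq₁ : q ≤ 1) : (2 : ℝ) ^ q ≤ 1 + q := by
  simpa [one_add_one_eq_two] using
    rpow_one_add_le_one_add_mul_self (s := 1) (by norm_num) hq₀ hq₁

lemma one_sub_rpow_add_rpow_le_of_le_one_sixteenth (hq₀ : 0 ≤ q) (hq₁ : q ≤ 1 / 100)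
    (hx₀ : 0 ≤ x) (hx₁ : x ≤ 1 / 16) :
    (1 - x) ^ (1 - q) + x ^ (1 - q) ≤ 1 + 9 / 20 * (2 ^ q - 1) := by
  have hs₀ : 0 ≤ 1 - q := by linarith
  have bernoulli : (1 - x) ^ (1 - q) ≤ 1 - (1 - q) * x :=
    one_sub_rpow_le_one_sub_mul (by linarith) hs₀ (by linarith)
  have tangent : x ^ (1 - q) ≤ ((2 : ℝ) ^ q) ^ 4 * ((1 - q) * x + q * (1 / 16)) := by
    have slope : (1 / 16 : ℝ) ^ (1 - q - 1) = ((2 : ℝ) ^ q) ^ 4 := by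
      rw [show (1 / 16 : ℝ) = (2 ^ 4)⁻¹ by norm_num, Real.inv_rpow (by positivity),
        ← Real.rpow_neg (by positivity), Real.rpow_pow_comm two_pos.le]
      congr 1
      ring
    rw [← slope]
    simpa only [sub_sub_cancel] using
      rpow_le_tangent hx₀ (by norm_num : (0 : ℝ) < 1 / 16) hs₀ (by linarith)
  have lower := one_add_half_mul_le_two_rpow hq₀
  have upper := two_rpow_le_one_add hq₀ (by linarith)
  obtain ⟨v, hv⟩ : ∃ v, (2 : ℝ) ^ q = 1 + v := ⟨2 ^ q - 1, by ring⟩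
  rw [hv] at lower upper tangent ⊢
  have hv₀ : 0 ≤ v := by linarith
  have pow_four : (1 + v) ^ 4 ≤ 1 + 5 * v := by
    have hv₁ : v ≤ 1 / 100 := by linarith
    nlinarith [hv₁, mul_nonneg hv₀ hv₀, mul_nonneg (mul_nonneg hv₀ hv₀) hv₀]
  calc (1 - x) ^ (1 - q) + x ^ (1 - q)
      ≤ 1 - (1 - q) * x + (1 + v) ^ 4 * ((1 - q) * x + q * (1 / 16)) := by gcongr
    _ = 1 + ((1 + v) ^ 4 - 1) * ((1 - q) * x) + (1 + v) ^ 4 * (q / 16) := by ring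
    _ ≤ 1 + (1 + 5 * v - 1) * (1 * (1 / 16)) + (1 + 5 * v) * (2 * v / 16) := by
        gcongr <;> linarith
    _ ≤ 1 + 9 / 20 * (1 + v - 1) := by nlinarith

/-- `IsTwoPointBound s C` says that the order relation of `{0 < 1}`, seen as a bilinear form, is at
most `C` on the vectors `((1 - x) ^ s, x ^ s)` and `(y ^ s, (1 - y) ^ s)`. These are the vectors of
unit norm in `ℓ^{1/s}`, and `C` is the factor lost for each coordinate of the cube. -/
def IsTwoPointBound (s C : ℝ) : Prop :=
  ∀ x ∈ Set.Icc (0 : ℝ) 1, ∀ y ∈ Set.Icc (0 : ℝ) 1,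
    (1 - x) ^ s * y ^ s + (1 - x) ^ s * (1 - y) ^ s + x ^ s * (1 - y) ^ s ≤ C

lemma two_point_le_of_le_one_sixteenth (hq₀ : 0 ≤ q) (hq₁ : q ≤ 1 / 100)
    (hx : x ∈ Set.Icc 0 (1 / 16)) (hy : y ∈ Set.Icc 0 (1 / 16)) :
    (1 - x) ^ (1 - q) * y ^ (1 - q) + (1 - x) ^ (1 - q) * (1 - y) ^ (1 - q)
      + x ^ (1 - q) * (1 - y) ^ (1 - q) ≤ 2 ^ q := by
  obtain ⟨hx₀, hx₁⟩ := hx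
  obtain ⟨hy₀, hy₁⟩ := hy
  have hφx := one_sub_rpow_add_rpow_le_of_le_one_sixteenth hq₀ hq₁ hx₀ hx₁
  have hφy := one_sub_rpow_add_rpow_le_of_le_one_sixteenth hq₀ hq₁ hy₀ hy₁
  have two_rpow_ge : (1 : ℝ) ≤ 2 ^ q := Real.one_le_rpow one_le_two hq₀
  have two_rpow_le := two_rpow_le_one_add hq₀ (by linarith)
  have hX : 0 ≤ x ^ (1 - q) * y ^ (1 - q) := by positivity
  have hY : 0 ≤ (1 - y) ^ (1 - q) := Real.rpow_nonneg (by linarith) _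
  calc (1 - x) ^ (1 - q) * y ^ (1 - q) + (1 - x) ^ (1 - q) * (1 - y) ^ (1 - q)
        + x ^ (1 - q) * (1 - y) ^ (1 - q)
      ≤ ((1 - x) ^ (1 - q) + x ^ (1 - q)) * ((1 - y) ^ (1 - q) + y ^ (1 - q)) := by linarith
    _ ≤ (1 + 9 / 20 * (2 ^ q - 1)) * (1 + 9 / 20 * (2 ^ q - 1)) := by gcongr
    _ ≤ 2 ^ q := by nlinarith

lemma two_point_le_of_one_sixteenth_le (hq₀ : 0 ≤ q) (hq₁ : q ≤ 1 / 100)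
    (hx : x ∈ Set.Icc (1 / 16) 1) (hy : y ∈ Set.Icc 0 1) (hyq : y ^ (1 - q) ≤ 21 / 20 * y) :
    (1 - x) ^ (1 - q) * y ^ (1 - q) + (1 - x) ^ (1 - q) * (1 - y) ^ (1 - q)
      + x ^ (1 - q) * (1 - y) ^ (1 - q) ≤ 2 ^ q := by
  obtain ⟨hx₀, hx₁⟩ := hx
  obtain ⟨hy₀, hy₁⟩ := hy
  have hs₀ : 0 ≤ 1 - q := by linarith
  have hs₁ : 1 - q ≤ 1 := by linarith
  set φ := (1 - x) ^ (1 - q) + x ^ (1 - q) with hφ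
  have φ_le : φ ≤ 2 ^ q := by
    simpa using rpow_add_rpow_le_two_rpow_mul (b := x) (sub_nonneg.2 hx₁) (by linarith) hs₀ hs₁
  have one_le_φ : 1 ≤ φ := by
    linarith [Real.self_le_rpow_of_le_one (sub_nonneg.2 hx₁) (by linarith) hs₁,
      Real.self_le_rpow_of_le_one (by linarith : 0 ≤ x) hx₁ hs₁]
  have bernoulli_y := one_sub_rpow_le_one_sub_mul hy₁ hs₀ hs₁
  have first_factor_le : (1 - x) ^ (1 - q) ≤ 15 / 16 + q / 16 := by
    nlinarith [one_sub_rpow_le_one_sub_mul hx₁ hs₀ hs₁]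
  have slope : (1 - q) * y ≤ φ * ((1 - q) * y) :=
    le_mul_of_one_le_left (mul_nonneg hs₀ hy₀) one_le_φ
  calc (1 - x) ^ (1 - q) * y ^ (1 - q) + (1 - x) ^ (1 - q) * (1 - y) ^ (1 - q)
        + x ^ (1 - q) * (1 - y) ^ (1 - q)
      = (1 - x) ^ (1 - q) * y ^ (1 - q) + φ * (1 - y) ^ (1 - q) := by rw [hφ]; ring
    _ ≤ (15 / 16 + q / 16) * (21 / 20 * y) + φ * (1 - (1 - q) * y) := by gcongr
    _ ≤ φ := by nlinarith
    _ ≤ 2 ^ q := φ_le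

lemma two_point_le_two_rpow_add (hq₀ : 0 ≤ q) (hq₁ : q ≤ 1) (hx : x ∈ Set.Icc 0 1)
    (hy : y ∈ Set.Icc 0 1) :
    (1 - x) ^ (1 - q) * y ^ (1 - q) + (1 - x) ^ (1 - q) * (1 - y) ^ (1 - q)
      + x ^ (1 - q) * (1 - y) ^ (1 - q) ≤ 2 ^ q + y ^ (1 - q) := by
  obtain ⟨hx₀, hx₁⟩ := hx
  obtain ⟨hy₀, hy₁⟩ := hy
  have hs₀ : 0 ≤ 1 - q := by linarith
  have hφ : (1 - x) ^ (1 - q) + x ^ (1 - q) ≤ 2 ^ q := by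
    simpa using rpow_add_rpow_le_two_rpow_mul (sub_nonneg.2 hx₁) hx₀ hs₀ (by linarith)
  have hP : (1 - x) ^ (1 - q) ≤ 1 := Real.rpow_le_one (by linarith) (by linarith) hs₀
  have hR : (1 - y) ^ (1 - q) ≤ 1 := Real.rpow_le_one (by linarith) (by linarith) hs₀
  calc (1 - x) ^ (1 - q) * y ^ (1 - q) + (1 - x) ^ (1 - q) * (1 - y) ^ (1 - q)
        + x ^ (1 - q) * (1 - y) ^ (1 - q)
      = (1 - x) ^ (1 - q) * y ^ (1 - q)
        + ((1 - x) ^ (1 - q) + x ^ (1 - q)) * (1 - y) ^ (1 - q) := by ring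
    _ ≤ 1 * y ^ (1 - q) + 2 ^ q * 1 := by gcongr
    _ = 2 ^ q + y ^ (1 - q) := by ring

-- Weights below the threshold `θ` are absorbed by the error term; above it `y ^ (1 - q)` is
-- comparable to `y`, and no error term is needed.
theorem isTwoPointBound_two_rpow_add (hq₀ : 0 ≤ q) (hq₁ : q ≤ 1 / 100) (hθ : 0 < θ)
    (hθq : θ ^ (-q) ≤ 21 / 20) : IsTwoPointBound (1 - q) (2 ^ q + 2 * θ) := by
  intro x hx y hy
  wlog hyx : y ≤ x generalizing x y
  · linarith [this y hy x hx (le_of_not_ge hyx)]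
  rcases le_total y θ with hyθ | hθy
  · have rpow_le : y ^ (1 - q) ≤ 2 * θ := calc
      y ^ (1 - q) ≤ θ ^ (1 - q) := Real.rpow_le_rpow hy.1 hyθ (by linarith)
      _ ≤ 21 / 20 * θ := rpow_one_sub_le_mul hθ le_rfl hq₀ hθq
      _ ≤ 2 * θ := by linarith
    linarith [two_point_le_two_rpow_add hq₀ (by linarith) hx hy]
  · refine le_add_of_le_of_nonneg ?_ (by positivity)
    rcases le_total x (1 / 16) with hx_small | hx_large
    · exact two_point_le_of_le_one_sixteenth hq₀ hq₁ ⟨hx.1, hx_small⟩ ⟨hy.1, hyx.trans hx_small⟩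
    · exact two_point_le_of_one_sixteenth_le hq₀ hq₁ ⟨hx_large, hx.2⟩ hy
        (rpow_one_sub_le_mul hθ hθy hq₀ hθq)

end TwoPointInequality

section Tensorization

lemma exists_mem_Icc_eq_mul_add {a b : ℝ} (ha : 0 ≤ a) (hb : 0 ≤ b) :
    ∃ x ∈ Set.Icc (0 : ℝ) 1, a = (1 - x) * (a + b) ∧ b = x * (a + b) := by
  rcases (add_nonneg ha hb).eq_or_lt with hab | hab
  · exact ⟨0, by simp, by linarith, by linarith⟩
  · refine ⟨b / (a + b), ⟨by positivity, by rw [div_le_one hab]; linarith⟩, ?_, ?_⟩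
    · rw [sub_mul, div_mul_cancel₀ _ hab.ne']
      ring
    · rw [div_mul_cancel₀ _ hab.ne']

namespace IsTwoPointBound

variable {s C : ℝ}

lemma one_le (h : IsTwoPointBound s C) : 1 ≤ C := by
  have h₀ := h 0 (by simp) 0 (by simp)
  have : (0 : ℝ) ≤ 0 ^ s := Real.rpow_nonneg le_rfl s
  simp only [sub_zero, Real.one_rpow, one_mul, mul_one] at h₀
  linarith

lemma add_add_le_mul (h : IsTwoPointBound s C) {a b c d : ℝ} (ha : 0 ≤ a) (hb : 0 ≤ b)
    (hc : 0 ≤ c) (hd : 0 ≤ d) :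
    a ^ s * c ^ s + a ^ s * d ^ s + b ^ s * d ^ s ≤ C * ((a + b) ^ s * (c + d) ^ s) := by
  obtain ⟨x, hx, hax, hbx⟩ := exists_mem_Icc_eq_mul_add ha hb
  obtain ⟨y, hy, hdy, hcy⟩ := exists_mem_Icc_eq_mul_add hd hc
  rw [add_comm d c] at hcy hdy
  have hab : 0 ≤ a + b := add_nonneg ha hb
  have hcd : 0 ≤ c + d := add_nonneg hc hd
  calc a ^ s * c ^ s + a ^ s * d ^ s + b ^ s * d ^ s
      = ((1 - x) ^ s * y ^ s + (1 - x) ^ s * (1 - y) ^ s + x ^ s * (1 - y) ^ s)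
          * ((a + b) ^ s * (c + d) ^ s) := by
        rw [show a ^ s = (1 - x) ^ s * (a + b) ^ s by
            rw [← Real.mul_rpow (sub_nonneg.2 hx.2) hab, ← hax],
          show b ^ s = x ^ s * (a + b) ^ s by rw [← Real.mul_rpow hx.1 hab, ← hbx],
          show c ^ s = y ^ s * (c + d) ^ s by rw [← Real.mul_rpow hy.1 hcd, ← hcy],
          show d ^ s = (1 - y) ^ s * (c + d) ^ s by
            rw [← Real.mul_rpow (sub_nonneg.2 hy.2) hcd, ← hdy]]
        ring
    _ ≤ C * ((a + b) ^ s * (c + d) ^ s) := by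
        gcongr
        exact h x hx y hy

end IsTwoPointBound

variable {α : Type*} [DecidableEq α]

lemma sum_nonMemberSubfamily_add_sum_memberSubfamily {M : Type*} [AddCommMonoid M] (a : α)
    (𝒜 : Finset (Finset α)) (f : Finset α → M) :
    ∑ A ∈ 𝒜.nonMemberSubfamily a, f A + ∑ A ∈ 𝒜.memberSubfamily a, f (insert a A)
      = ∑ A ∈ 𝒜, f A := by
  rw [← sum_filter_add_sum_filter_not 𝒜 (a ∉ ·) f, ← sum_image (f := f) (g := insert a),
    image_insert_memberSubfamily]
  · simp [nonMemberSubfamily]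
  · exact (insert_erase_invOn.2.injOn).mono fun A hA ↦ by simp_all

lemma card_interedges_eq_sum {β γ : Type*} (r : β → γ → Prop) [∀ b, DecidablePred (r b)]
    (S : Finset β) (T : Finset γ) :
    #(Rel.interedges r S T) = ∑ x ∈ S, ∑ y ∈ T, if r x y then 1 else 0 := by
  rw [Rel.interedges, card_filter, sum_product]

lemma card_interedges_subset_eq_add (a : α) (𝒜 ℬ : Finset (Finset α)) :
    #(Rel.interedges (· ⊆ ·) 𝒜 ℬ)
      = #(Rel.interedges (· ⊆ ·) (𝒜.nonMemberSubfamily a) (ℬ.nonMemberSubfamily a))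
        + #(Rel.interedges (· ⊆ ·) (𝒜.nonMemberSubfamily a) (ℬ.memberSubfamily a))
        + #(Rel.interedges (· ⊆ ·) (𝒜.memberSubfamily a) (ℬ.memberSubfamily a)) := by
  simp only [card_interedges_eq_sum]
  rw [← sum_nonMemberSubfamily_add_sum_memberSubfamily a 𝒜]
  simp only [← sum_nonMemberSubfamily_add_sum_memberSubfamily a ℬ, ← sum_add_distrib]
  congr 1
  · refine sum_congr rfl fun A hA ↦ ?_
    simp only [subset_insert_iff_of_notMem (mem_nonMemberSubfamily.1 hA).2]
  · refine sum_congr rfl fun A hA ↦ ?_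
    have no_pairs : ∑ B ∈ ℬ.nonMemberSubfamily a, (if insert a A ⊆ B then 1 else 0) = 0 :=
      sum_eq_zero fun B hB ↦
        if_neg fun hAB ↦ (mem_nonMemberSubfamily.1 hB).2 (hAB (mem_insert_self a A))
    simp only [no_pairs, zero_add, insert_subset_insert_iff (mem_memberSubfamily.1 hA).2]

lemma nonMemberSubfamily_subset_powerset {a : α} {U : Finset α} {𝒜 : Finset (Finset α)}
    (h𝒜 : 𝒜 ⊆ (insert a U).powerset) : 𝒜.nonMemberSubfamily a ⊆ U.powerset := fun A hA ↦ by
  rw [mem_nonMemberSubfamily] at hA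
  exact mem_powerset.2 ((subset_insert_iff_of_notMem hA.2).1 (mem_powerset.1 (h𝒜 hA.1)))

lemma memberSubfamily_subset_powerset {a : α} {U : Finset α} {𝒜 : Finset (Finset α)}
    (h𝒜 : 𝒜 ⊆ (insert a U).powerset) : 𝒜.memberSubfamily a ⊆ U.powerset := fun A hA ↦ by
  rw [mem_memberSubfamily] at hA
  exact mem_powerset.2 ((insert_subset_insert_iff hA.2).1 (mem_powerset.1 (h𝒜 hA.1)))

namespace IsTwoPointBound

variable {s C : ℝ}

lemma card_interedges_subset_le_of_subset_powerset (h : IsTwoPointBound s C) (hs : s ≤ 1)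
    {U : Finset α} {𝒜 ℬ : Finset (Finset α)} (h𝒜 : 𝒜 ⊆ U.powerset) (hℬ : ℬ ⊆ U.powerset) :
    (#(Rel.interedges (· ⊆ ·) 𝒜 ℬ) : ℝ) ≤ C ^ #U * ((#𝒜 : ℝ) ^ s * (#ℬ : ℝ) ^ s) := by
  induction U using Finset.induction_on generalizing 𝒜 ℬ with
  | empty =>
    have card_le_rpow {𝒞 : Finset (Finset α)} (h𝒞 : 𝒞 ⊆ (∅ : Finset α).powerset) :
        (#𝒞 : ℝ) ≤ (#𝒞 : ℝ) ^ s :=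
      Real.self_le_rpow_of_le_one (Nat.cast_nonneg _) (mod_cast card_le_card h𝒞) hs
    calc (#(Rel.interedges (· ⊆ ·) 𝒜 ℬ) : ℝ) ≤ #𝒜 * #ℬ :=
          mod_cast Rel.card_interedges_le_mul _ 𝒜 ℬ
      _ ≤ (#𝒜 : ℝ) ^ s * (#ℬ : ℝ) ^ s := by gcongr <;> exact card_le_rpow ‹_›
      _ = C ^ #(∅ : Finset α) * ((#𝒜 : ℝ) ^ s * (#ℬ : ℝ) ^ s) := by simp
  | insert a U ha ih =>
    have h𝒜₀ := nonMemberSubfamily_subset_powerset h𝒜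
    have h𝒜₁ := memberSubfamily_subset_powerset h𝒜
    have hℬ₀ := nonMemberSubfamily_subset_powerset hℬ
    have hℬ₁ := memberSubfamily_subset_powerset hℬ
    have hC : 0 ≤ C := zero_le_one.trans h.one_le
    rw [card_interedges_subset_eq_add a, card_insert_of_notMem ha,
      ← card_memberSubfamily_add_card_nonMemberSubfamily a 𝒜,
      ← card_memberSubfamily_add_card_nonMemberSubfamily a ℬ, add_comm #(𝒜.memberSubfamily a),
      add_comm #(ℬ.memberSubfamily a)]
    push_cast
    set a₀ := (#(𝒜.nonMemberSubfamily a) : ℝ)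
    set a₁ := (#(𝒜.memberSubfamily a) : ℝ)
    set b₀ := (#(ℬ.nonMemberSubfamily a) : ℝ)
    set b₁ := (#(ℬ.memberSubfamily a) : ℝ)
    calc _ ≤ C ^ #U * (a₀ ^ s * b₀ ^ s) + C ^ #U * (a₀ ^ s * b₁ ^ s)
          + C ^ #U * (a₁ ^ s * b₁ ^ s) :=
          add_le_add_three (ih h𝒜₀ hℬ₀) (ih h𝒜₀ hℬ₁) (ih h𝒜₁ hℬ₁)
      _ = C ^ #U * (a₀ ^ s * b₀ ^ s + a₀ ^ s * b₁ ^ s + a₁ ^ s * b₁ ^ s) := by ring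
      _ ≤ C ^ #U * (C * ((a₀ + a₁) ^ s * (b₀ + b₁) ^ s)) := by
          gcongr
          exact h.add_add_le_mul (by positivity) (by positivity) (by positivity) (by positivity)
      _ = C ^ (#U + 1) * ((a₀ + a₁) ^ s * (b₀ + b₁) ^ s) := by ring

theorem card_interedges_subset_le [Fintype α] (h : IsTwoPointBound s C) (hs : s ≤ 1)
    (𝒜 ℬ : Finset (Finset α)) :
    (#(Rel.interedges (· ⊆ ·) 𝒜 ℬ) : ℝ)
      ≤ C ^ Fintype.card α * ((#𝒜 : ℝ) * #ℬ) ^ s := by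
  rw [Real.mul_rpow (by positivity) (by positivity)]
  exact h.card_interedges_subset_le_of_subset_powerset hs (U := univ) (by simp) (by simp)

end IsTwoPointBound

end Tensorization

section LargeExponent

lemma log_le_of_two_rpow_neg_mul_le {P q t ε : ℝ} {n : ℕ} (hP : 0 < P) (hq : 0 ≤ q) (hε : 0 ≤ ε)
    (h : 2 ^ (-t) * P ≤ (2 ^ q + ε) ^ n * P ^ (1 - q)) :
    q * Real.log P ≤ t * Real.log 2 + n * (q * Real.log 2 + ε) := by
  have two_rpow_pos (s : ℝ) : (0 : ℝ) < 2 ^ s := by positivity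
  have log_base_le : Real.log (2 ^ q + ε) ≤ q * Real.log 2 + ε := by
    have one_le : (1 : ℝ) ≤ 2 ^ q := Real.one_le_rpow one_le_two hq
    calc Real.log (2 ^ q + ε) ≤ Real.log (2 ^ q * Real.exp ε) :=
          Real.log_le_log (by positivity) (by nlinarith [Real.add_one_le_exp ε])
      _ = q * Real.log 2 + ε := by
          rw [Real.log_mul (two_rpow_pos q).ne' (Real.exp_pos ε).ne', Real.log_rpow two_pos,
            Real.log_exp]
  have log_le := Real.log_le_log (by positivity) h
  rw [Real.log_mul (by positivity) (by positivity), Real.log_mul (by positivity) (by positivity),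
    Real.log_rpow two_pos, Real.log_rpow hP, Real.log_pow] at log_le
  have : n * Real.log (2 ^ q + ε) ≤ n * (q * Real.log 2 + ε) := by gcongr
  linarith

lemma isTwoPointBound_logb {x : ℝ} (hx : 2 ≤ x) :
    IsTwoPointBound (1 - Real.logb x 2 / 240)
      (2 ^ (Real.logb x 2 / 240) + 2 * (x ^ 15)⁻¹) := by
  have hx₀ : 0 < x := by linarith
  have logb_nonneg : 0 ≤ Real.logb x 2 := Real.logb_nonneg (by linarith) one_le_two
  have logb_le_one : Real.logb x 2 ≤ 1 := by
    simpa [Real.logb_self_eq_one (by linarith : 1 < x)] using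
      Real.logb_le_logb_of_le (b := x) (by linarith) two_pos hx
  refine isTwoPointBound_two_rpow_add (by positivity) (by linarith) (by positivity) ?_
  calc ((x ^ 15)⁻¹ : ℝ) ^ (-(Real.logb x 2 / 240)) = (x ^ Real.logb x 2) ^ (16⁻¹ : ℝ) := by
        rw [← Real.rpow_natCast, ← Real.rpow_neg hx₀.le, ← Real.rpow_mul hx₀.le,
          ← Real.rpow_mul hx₀.le]
        congr 1
        push_cast
        ring
    _ = 2 ^ (16⁻¹ : ℝ) := by rw [Real.rpow_logb hx₀ (by linarith) two_pos]
    _ ≤ 21 / 20 := by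
        rw [Real.rpow_inv_le_iff_of_pos two_pos.le (by norm_num) (by norm_num)]
        norm_num

lemma mul_two_mul_inv_pow_lt {x d : ℝ} (hx : 2 ≤ x) (hd : (x ^ 2)⁻¹ ≤ d) :
    x * (2 * (x ^ 15)⁻¹) < d * Real.log 2 / 1200 := by
  have hd₀ : 0 < d := lt_of_lt_of_le (by positivity) hd
  have inv_le : (x ^ 12)⁻¹ ≤ (2 ^ 12)⁻¹ := by gcongr
  calc x * (2 * (x ^ 15)⁻¹) = 2 * (x ^ 12)⁻¹ * (x ^ 2)⁻¹ := by field_simp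
    _ ≤ 2 * (2 ^ 12)⁻¹ * d := by gcongr
    _ < d * Real.log 2 / 1200 := by nlinarith [Real.log_two_gt_d9]

end LargeExponent

section DoubleCounting

variable {β γ : Type*}

lemma card_filter_mul_card_filter_le_card_interedges {r : β → γ → Prop}
    [∀ b, DecidablePred (r b)] {p : β → Prop} {q : γ → Prop} [DecidablePred p] [DecidablePred q]
    (hr : ∀ b c, p b → q c → r b c) (S : Finset β) (T : Finset γ) :
    #{b ∈ S | p b} * #{c ∈ T | q c} ≤ #(Rel.interedges r S T) := by
  rw [← card_product]
  refine card_le_card fun x hx ↦ ?_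
  simp only [mem_product, mem_filter] at hx
  exact Rel.mem_interedges_iff.2 ⟨hx.1.1, hx.2.1, hr _ _ hx.1.2 hx.2.2⟩

lemma card_mul_le_card_interedges {r : β → γ → Prop} [∀ b, DecidablePred (r b)] {S : Finset β}
    {T T' : Finset γ} {k : ℝ} (hT : T ⊆ T') (hk : ∀ c ∈ T, k ≤ #{b ∈ S | r b c}) :
    #T * k ≤ #(Rel.interedges r S T') := by
  calc #T * k ≤ ∑ c ∈ T, (#{b ∈ S | r b c} : ℝ) := by
        simpa using card_nsmul_le_sum T _ k hk
    _ = #(Rel.interedges r S T) := by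
        rw [card_interedges_eq_sum, sum_comm]
        simp
    _ ≤ #(Rel.interedges r S T') := mod_cast card_le_card (Rel.interedges_mono subset_rfl hT)

lemma one_sub_mul_card_le_card_filter_of_forall [Fintype γ] {r : γ → β → Prop}
    [∀ c, DecidablePred (r c)] {p : β → Prop} [DecidablePred p] {S : Finset β} {T : Finset γ}
    {η : ℝ} (hη : 0 ≤ η) (hp : ∀ b, (∀ c ∈ T, r c b) → p b)
    (h : ∀ c ∈ T, (#{b ∈ S | ¬ r c b} : ℝ) ≤ η / Fintype.card γ * #S) :
    (1 - η) * #S ≤ #{b ∈ S | p b} := by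
  let _ := Classical.decEq β
  have cover : {b ∈ S | ¬ p b} ⊆ T.biUnion fun c ↦ {b ∈ S | ¬ r c b} := fun b hb ↦ by
    obtain ⟨hbS, hpb⟩ := mem_filter.1 hb
    obtain ⟨c, hc, hrcb⟩ : ∃ c ∈ T, ¬ r c b := by
      by_contra! hr
      exact hpb (hp b hr)
    exact mem_biUnion.2 ⟨c, hc, mem_filter.2 ⟨hbS, hrcb⟩⟩
  have union_bound : (#{b ∈ S | ¬ p b} : ℝ) ≤ η * #S := calc
    (#{b ∈ S | ¬ p b} : ℝ) ≤ ∑ c ∈ T, (#{b ∈ S | ¬ r c b} : ℝ) :=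
        mod_cast (card_le_card cover).trans card_biUnion_le
    _ ≤ #T * (η / Fintype.card γ * #S) := by simpa using sum_le_card_nsmul T _ _ h
    _ = #T / Fintype.card γ * (η * #S) := by ring
    _ ≤ 1 * (η * #S) := by
        gcongr
        exact div_le_one_of_le₀ (mod_cast card_le_univ T) (Nat.cast_nonneg _)
    _ = η * #S := one_mul _
  have split : (#{b ∈ S | p b} : ℝ) + #{b ∈ S | ¬ p b} = #S :=
    mod_cast card_filter_add_card_filter_not (s := S) p
  linarith

end DoubleCounting

section SmallExponent

open scoped FinsetFamily

variable {α : Type*} [DecidableEq α]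

lemma card_filter_notMem_le {U : Finset α} {𝒞 : Finset (Finset α)} (h𝒞 : 𝒞 ⊆ U.powerset) {i : α}
    (hi : i ∈ U) : (#{C ∈ 𝒞 | i ∉ C} : ℝ) ≤ 2 ^ #U / 2 := by
  have subset_erase : {C ∈ 𝒞 | i ∉ C} ⊆ (U.erase i).powerset := fun C hC ↦ by
    rw [mem_filter] at hC
    exact mem_powerset.2 (subset_erase.2 ⟨mem_powerset.1 (h𝒞 hC.1), hC.2⟩)
  have card_le : #{C ∈ 𝒞 | i ∉ C} ≤ 2 ^ #(U.erase i) := by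
    simpa using card_le_card subset_erase
  rw [le_div_iff₀ two_pos, ← card_erase_add_one hi, pow_succ]
  gcongr
  exact_mod_cast card_le

lemma card_filter_subset_le (𝒜 : Finset (Finset α)) (U : Finset α) :
    #{A ∈ 𝒜 | A ⊆ U} ≤ 2 ^ #U := by
  rw [← card_powerset]
  exact card_le_card fun A hA ↦ mem_powerset.2 (mem_filter.1 hA).2

-- Each `B` missing some `i ∈ U` fails to contain the many `A ⊆ U` with `i ∈ A`.
lemma one_sub_three_mul_card_le_card_filter_superset {𝒜 ℬ : Finset (Finset α)} {U : Finset α}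
    {δ : ℝ} (hδ : (#(Rel.interedges (¬ · ⊆ ·) 𝒜 ℬ) : ℝ) ≤ δ * (#𝒜 * #ℬ))
    (hU : 9 / 10 * 2 ^ #U ≤ (#{A ∈ 𝒜 | A ⊆ U} : ℝ))
    (h𝒜 : 19 / 20 * #𝒜 ≤ (#{A ∈ 𝒜 | A ⊆ U} : ℝ)) :
    (1 - 3 * δ) * #ℬ ≤ #{B ∈ ℬ | U ⊆ B} := by
  have many_nonsubsets : ∀ B ∈ ({B ∈ ℬ | ¬ U ⊆ B} : Finset (Finset α)),
      (#𝒜 : ℝ) / 3 ≤ #{A ∈ 𝒜 | ¬ A ⊆ B} := fun B hB ↦ by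
    obtain ⟨i, hiU, hiB⟩ := not_subset.1 (mem_filter.1 hB).2
    set 𝒞 := {A ∈ 𝒜 | A ⊆ U}
    have half := card_filter_notMem_le (𝒞 := 𝒞) (fun A hA ↦ mem_powerset.2 (mem_filter.1 hA).2) hiU
    have split : (#{A ∈ 𝒞 | i ∈ A} : ℝ) + #{A ∈ 𝒞 | i ∉ A} = #𝒞 :=
      mod_cast card_filter_add_card_filter_not (s := 𝒞) (i ∈ ·)
    have mem_le : #{A ∈ 𝒞 | i ∈ A} ≤ #{A ∈ 𝒜 | ¬ A ⊆ B} := card_le_card fun A hA ↦ by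
      rw [mem_filter] at hA ⊢
      exact ⟨(mem_filter.1 hA.1).1, fun hAB ↦ hiB (hAB hA.2)⟩
    have mem_le' : (#{A ∈ 𝒞 | i ∈ A} : ℝ) ≤ #{A ∈ 𝒜 | ¬ A ⊆ B} := mod_cast mem_le
    linarith
  have double_count := (card_mul_le_card_interedges (filter_subset _ ℬ) many_nonsubsets).trans hδ
  have card_pos : (0 : ℝ) < #𝒜 := by
    have : (0 : ℝ) < 2 ^ #U := by positivity
    have : (#{A ∈ 𝒜 | A ⊆ U} : ℝ) ≤ #𝒜 := mod_cast card_filter_le 𝒜 _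
    linarith
  have exceptional_le : (#{B ∈ ℬ | ¬ U ⊆ B} : ℝ) ≤ 3 * δ * #ℬ := by
    refine le_of_mul_le_mul_right ?_ card_pos
    linarith
  have split : (#{B ∈ ℬ | U ⊆ B} : ℝ) + #{B ∈ ℬ | ¬ U ⊆ B} = #ℬ :=
    mod_cast card_filter_add_card_filter_not (s := ℬ) (U ⊆ ·)
  linarith

variable [Fintype α]

lemma card_filter_superset_eq_card_filter_compls_subset_compl (ℬ : Finset (Finset α))
    (U : Finset α) : #{B ∈ ℬ | U ⊆ B} = #{B ∈ ℬᶜˢ | B ⊆ Uᶜ} := by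
  simp [compls, filter_map]

lemma card_interedges_not_subset_compls (𝒜 ℬ : Finset (Finset α)) :
    #(Rel.interedges (¬ · ⊆ ·) ℬᶜˢ 𝒜ᶜˢ) = #(Rel.interedges (¬ · ⊆ ·) 𝒜 ℬ) := by
  rw [card_interedges_eq_sum, card_interedges_eq_sum, sum_comm]
  simp [compls]

lemma card_filter_superset_le (ℬ : Finset (Finset α)) (U : Finset α) :
    #{B ∈ ℬ | U ⊆ B} ≤ 2 ^ #Uᶜ := by
  rw [card_filter_superset_eq_card_filter_compls_subset_compl]
  exact card_filter_subset_le _ _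

lemma one_sub_three_mul_card_le_card_filter_subset {𝒜 ℬ : Finset (Finset α)} {U : Finset α}
    {δ : ℝ} (hδ : (#(Rel.interedges (¬ · ⊆ ·) 𝒜 ℬ) : ℝ) ≤ δ * (#𝒜 * #ℬ))
    (hU : 9 / 10 * 2 ^ #Uᶜ ≤ (#{B ∈ ℬ | U ⊆ B} : ℝ))
    (hℬ : 19 / 20 * #ℬ ≤ (#{B ∈ ℬ | U ⊆ B} : ℝ)) :
    (1 - 3 * δ) * #𝒜 ≤ #{A ∈ 𝒜 | A ⊆ U} := by
  rw [card_filter_superset_eq_card_filter_compls_subset_compl] at hU hℬ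
  rw [← card_interedges_not_subset_compls, mul_comm (#𝒜 : ℝ), ← card_compls 𝒜,
    ← card_compls ℬ] at hδ
  rw [← card_compls ℬ] at hℬ
  simpa [card_filter_superset_eq_card_filter_compls_subset_compl] using
    one_sub_three_mul_card_le_card_filter_superset hδ hU hℬ

-- Take `U` to be the set of elements contained in almost every member of `ℬ`: an element outside
-- `U` lying in many members of `𝒜` would produce too many pairs with `A ⊄ B`.
lemma exists_one_sub_mul_card_le_card_filter {𝒜 ℬ : Finset (Finset α)} {η : ℝ} (hη : 0 ≤ η)
    (h : (#(Rel.interedges (¬ · ⊆ ·) 𝒜 ℬ) : ℝ) ≤ (η / Fintype.card α) ^ 2 * (#𝒜 * #ℬ)) :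
    ∃ U : Finset α, (1 - η) * #𝒜 ≤ #{A ∈ 𝒜 | A ⊆ U} ∧ (1 - η) * #ℬ ≤ #{B ∈ ℬ | U ⊆ B} := by
  set ρ := η / Fintype.card α
  obtain ⟨U, mem_U⟩ : ∃ U : Finset α, ∀ i, i ∈ U ↔ (#{B ∈ ℬ | i ∉ B} : ℝ) ≤ ρ * #ℬ :=
    ⟨({i | (#{B ∈ ℬ | i ∉ B} : ℝ) ≤ ρ * #ℬ} : Finset α), fun i ↦ mem_filter_univ i⟩
  have rare_of_notMem (i : α) (hi : i ∉ U) : (#{A ∈ 𝒜 | i ∈ A} : ℝ) ≤ ρ * #𝒜 := by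
    rw [mem_U, not_le] at hi
    by_contra! hlarge
    have few : (#{A ∈ 𝒜 | i ∈ A} : ℝ) * #{B ∈ ℬ | i ∉ B} ≤ ρ ^ 2 * (#𝒜 * #ℬ) :=
      le_trans (mod_cast card_filter_mul_card_filter_le_card_interedges
        (fun A B hA hB hAB ↦ hB (hAB hA)) 𝒜 ℬ) h
    have many := mul_lt_mul'' hlarge hi (by positivity) (by positivity)
    linarith
  refine ⟨U, one_sub_mul_card_le_card_filter_of_forall (r := (· ∉ ·)) (T := Uᶜ) hη ?_ ?_,
    one_sub_mul_card_le_card_filter_of_forall hη (fun _ ↦ id) fun i hi ↦ (mem_U i).1 hi⟩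
  · intro A hA i hi
    by_contra hiU
    exact hA i (mem_compl.2 hiU) hi
  · simpa only [not_not, mem_compl] using rare_of_notMem

lemma one_sub_three_mul_sq_mul_card_mul_card_le {𝒜 ℬ : Finset (Finset α)} {δ : ℝ}
    (hδ : δ ≤ (1 / 20 / Fintype.card α) ^ 2) (hδ₁ : δ ≤ 1 / 3)
    (hX : (#(Rel.interedges (¬ · ⊆ ·) 𝒜 ℬ) : ℝ) ≤ δ * (#𝒜 * #ℬ))
    (h : (2 : ℝ) ^ Fintype.card α ≤ #𝒜 * #ℬ) :
    (1 - 3 * δ) ^ 2 * (#𝒜 * #ℬ) ≤ 2 ^ Fintype.card α := by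
  obtain ⟨U, h𝒜, hℬ⟩ := exists_one_sub_mul_card_le_card_filter (η := 1 / 20) (by norm_num)
    (hX.trans (by gcongr))
  have card_cube : (2 : ℝ) ^ #U * 2 ^ #Uᶜ = 2 ^ Fintype.card α := by
    rw [← pow_add, card_add_card_compl]
  have upper𝒜 : (#{A ∈ 𝒜 | A ⊆ U} : ℝ) ≤ 2 ^ #U := mod_cast card_filter_subset_le 𝒜 U
  have upperℬ : (#{B ∈ ℬ | U ⊆ B} : ℝ) ≤ 2 ^ #Uᶜ := mod_cast card_filter_superset_le ℬ U
  have product_lower : 9 / 10 * ((2 : ℝ) ^ #U * 2 ^ #Uᶜ)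
      ≤ #{A ∈ 𝒜 | A ⊆ U} * #{B ∈ ℬ | U ⊆ B} := calc
    9 / 10 * ((2 : ℝ) ^ #U * 2 ^ #Uᶜ) ≤ 9 / 10 * (#𝒜 * #ℬ) := by
        rw [card_cube]
        gcongr
    _ ≤ (1 - 1 / 20) * #𝒜 * ((1 - 1 / 20) * #ℬ) := by
        linarith [show (0 : ℝ) ≤ #𝒜 * #ℬ by positivity]
    _ ≤ _ := mul_le_mul h𝒜 hℬ (by positivity) (by positivity)
  have lower𝒜 : 9 / 10 * 2 ^ #U ≤ (#{A ∈ 𝒜 | A ⊆ U} : ℝ) := by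
    refine le_of_mul_le_mul_right ?_ (show (0 : ℝ) < 2 ^ #Uᶜ by positivity)
    linarith [mul_le_mul_of_nonneg_left upperℬ (Nat.cast_nonneg (α := ℝ) #{A ∈ 𝒜 | A ⊆ U})]
  have lowerℬ : 9 / 10 * 2 ^ #Uᶜ ≤ (#{B ∈ ℬ | U ⊆ B} : ℝ) := by
    refine le_of_mul_le_mul_left ?_ (show (0 : ℝ) < 2 ^ #U by positivity)
    linarith [mul_le_mul_of_nonneg_right upper𝒜 (Nat.cast_nonneg (α := ℝ) #{B ∈ ℬ | U ⊆ B})]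
  calc (1 - 3 * δ) ^ 2 * (#𝒜 * #ℬ) = (1 - 3 * δ) * #𝒜 * ((1 - 3 * δ) * #ℬ) := by ring
    _ ≤ #{A ∈ 𝒜 | A ⊆ U} * #{B ∈ ℬ | U ⊆ B} :=
        mul_le_mul
          (one_sub_three_mul_card_le_card_filter_subset hX lowerℬ (by linarith))
          (one_sub_three_mul_card_le_card_filter_superset hX lower𝒜 (by linarith))
          (mul_nonneg (by linarith) (by positivity)) (by positivity)
    _ ≤ 2 ^ #U * 2 ^ #Uᶜ := by gcongr
    _ = 2 ^ Fintype.card α := card_cube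

end SmallExponent

section Main

variable {α : Type*} [Fintype α] [DecidableEq α] {𝒜 ℬ : Finset (Finset α)} {d : ℝ}

lemma card_mul_card_lt_of_inv_sq_le (hα : 2 ≤ Fintype.card α)
    (hd : ((Fintype.card α : ℝ) ^ 2)⁻¹ ≤ d)
    (h : (2 : ℝ) ^ (-d / 300) * (#𝒜 * #ℬ) ≤ #(Rel.interedges (· ⊆ ·) 𝒜 ℬ)) :
    (#𝒜 : ℝ) * #ℬ < (Fintype.card α : ℝ) ^ d * 2 ^ Fintype.card α := by
  set n := Fintype.card α
  have hn : (2 : ℝ) ≤ n := mod_cast hα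
  have hn₀ : (0 : ℝ) < n := by linarith
  rcases (mul_nonneg (Nat.cast_nonneg #𝒜) (Nat.cast_nonneg #ℬ) : (0 : ℝ) ≤ #𝒜 * #ℬ).eq_or_lt
    with hP | hP
  · rw [← hP]
    positivity
  have log_n_pos : 0 < Real.log n := Real.log_pos (by linarith)
  set q := Real.logb n 2 / 240 with hq_def
  have hq : 0 < q := div_pos (Real.logb_pos (by linarith) one_lt_two) (by norm_num)
  have q_mul_log : q * Real.log n = Real.log 2 / 240 := by
    rw [hq_def, Real.logb]
    field_simp
  have log_le : q * Real.log (#𝒜 * #ℬ)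
      ≤ d / 300 * Real.log 2 + n * (q * Real.log 2 + 2 * ((n : ℝ) ^ 15)⁻¹) := by
    refine log_le_of_two_rpow_neg_mul_le hP hq.le (by positivity) ?_
    rw [← neg_div]
    exact h.trans ((isTwoPointBound_logb hn).card_interedges_subset_le (by linarith) 𝒜 ℬ)
  have error_lt := mul_two_mul_inv_pow_lt hn hd
  have log_rhs : Real.log ((n : ℝ) ^ d * 2 ^ n) = d * Real.log n + n * Real.log 2 := by
    rw [Real.log_mul (by positivity) (by positivity), Real.log_rpow hn₀, Real.log_pow]
  refine (Real.log_lt_log_iff hP (by positivity)).1 ?_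
  rw [log_rhs]
  refine lt_of_mul_lt_mul_left ?_ hq.le
  calc q * Real.log (#𝒜 * #ℬ)
      ≤ d / 300 * Real.log 2 + n * (q * Real.log 2 + 2 * ((n : ℝ) ^ 15)⁻¹) := log_le
    _ < d * (Real.log 2 / 240) + q * (n * Real.log 2) := by linarith
    _ = q * (d * Real.log n + n * Real.log 2) := by rw [← q_mul_log]; ring

lemma card_mul_card_lt_of_le_inv_sq (hα : 2 ≤ Fintype.card α) (hd₀ : 0 < d)
    (hd : d ≤ ((Fintype.card α : ℝ) ^ 2)⁻¹)
    (h : (2 : ℝ) ^ (-d / 300) * (#𝒜 * #ℬ) ≤ #(Rel.interedges (· ⊆ ·) 𝒜 ℬ)) :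
    (#𝒜 : ℝ) * #ℬ < (Fintype.card α : ℝ) ^ d * 2 ^ Fintype.card α := by
  set n := Fintype.card α
  have hn : (2 : ℝ) ≤ n := mod_cast hα
  set δ := d * Real.log 2 / 300 with hδ_def
  have hδ₀ : 0 < δ := by positivity
  have δ_le : δ ≤ d / 400 := by nlinarith [Real.log_two_lt_d9]
  have d_le : d ≤ 1 / 4 := hd.trans (by
    rw [one_div]
    exact inv_anti₀ (by norm_num) (by nlinarith))
  have few_nonpairs : (#(Rel.interedges (¬ · ⊆ ·) 𝒜 ℬ) : ℝ) ≤ δ * (#𝒜 * #ℬ) := by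
    have split : (#(Rel.interedges (· ⊆ ·) 𝒜 ℬ) : ℝ) + #(Rel.interedges (¬ · ⊆ ·) 𝒜 ℬ)
        = #𝒜 * #ℬ := mod_cast Rel.card_interedges_add_card_interedges_compl _ 𝒜 ℬ
    have density_ge : 1 - δ ≤ (2 : ℝ) ^ (-d / 300) := by
      rw [Real.rpow_def_of_pos two_pos]
      refine le_trans (le_of_eq ?_) (Real.add_one_le_exp _)
      rw [hδ_def]
      ring
    nlinarith [mul_le_mul_of_nonneg_right density_ge
      (show (0 : ℝ) ≤ #𝒜 * #ℬ by positivity)]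
  have rpow_ge : 1 + 300 * δ ≤ (n : ℝ) ^ d := calc
    1 + 300 * δ ≤ 2 ^ d := by
        rw [Real.rpow_def_of_pos two_pos]
        linarith [Real.add_one_le_exp (Real.log 2 * d)]
    _ ≤ (n : ℝ) ^ d := by gcongr
  by_contra! hlarge
  have two_pow_pos : (0 : ℝ) < 2 ^ n := by positivity
  have upper : (1 - 3 * δ) ^ 2 * (#𝒜 * #ℬ) ≤ 2 ^ n := by
    refine one_sub_three_mul_sq_mul_card_mul_card_le ?_ (by linarith) few_nonpairs ?_
    · rw [div_pow, div_eq_mul_inv]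
      linarith
    · exact (le_mul_of_one_le_left two_pow_pos.le (by linarith)).trans hlarge
  have lower : (1 - 3 * δ) ^ 2 * ((1 + 300 * δ) * 2 ^ n) ≤ (1 - 3 * δ) ^ 2 * (#𝒜 * #ℬ) :=
    mul_le_mul_of_nonneg_left ((mul_le_mul_of_nonneg_right rpow_ge two_pow_pos.le).trans hlarge)
      (sq_nonneg _)
  have expand : 1 < (1 - 3 * δ) ^ 2 * (1 + 300 * δ) := by
    nlinarith [mul_pos hδ₀ (show 0 < 294 - 1791 * δ by linarith), pow_pos hδ₀ 3]
  linarith [mul_lt_mul_of_pos_right expand two_pow_pos]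

theorem stmt2_general (hα : 2 ≤ Fintype.card α) (hd : 0 < d)
    (h : (2 : ℝ) ^ (-d / 300) * (#𝒜 * #ℬ) ≤ #(Rel.interedges (· ⊆ ·) 𝒜 ℬ)) :
    (#𝒜 : ℝ) * #ℬ < (Fintype.card α : ℝ) ^ d * 2 ^ Fintype.card α := by
  rcases le_total d ((Fintype.card α : ℝ) ^ 2)⁻¹ with hd_small | hd_large
  · exact card_mul_card_lt_of_le_inv_sq hα hd hd_small h
  · exact card_mul_card_lt_of_inv_sq_le hα hd_large h

end Main

theorem stmt2 (n : ℕ) (hn : 2 ≤ n) (d : ℝ) (hd0 : 0 < d) (hd1 : d ≤ 1)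
    (𝒜 ℬ : Finset (Finset (Fin n)))
    (h : (2 : ℝ) ^ (-d / 300) * ((𝒜.card : ℝ) * ℬ.card) ≤ (crossComp 𝒜 ℬ : ℝ)) :
    (𝒜.card : ℝ) * ℬ.card < (n : ℝ) ^ d * 2 ^ n := by
  have strict_le : crossComp 𝒜 ℬ ≤ #(Rel.interedges (· ⊆ ·) 𝒜 ℬ) :=
    card_le_card (monotone_filter_right _ fun _ _ hAB ↦ hAB.subset)
  simpa using stmt2_general (by simpa using hn) hd0 (h.trans (mod_cast strict_le))
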